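/- In the finite discriminative clustering setup with strictly positive posterior (c(x,k) > 0 for all x, k), for every convex function f : (0,∞) → ℝ with f(1) = 0, the one-vs-all f-divergence GEMINI is at most the one-vs-one f-divergence GEMINI: ∑_{k=1}^K π(k)·D_f(q_k‖p) ≤ ∑_{a=1}^K ∑_{b=1}^K π(a)·π(b)·D_f(q_a‖q_b). -/

import Mathlib

open Finset

/-!
The perspective `(r, s) ↦ s * f (r / s)` of a convex function is jointly convex, hence so is the
`f`-divergence, as a sum of perspectives. The data distribution is the mixture `∑ b, π b • q b` of
the cluster-conditional distributions, so for each cluster `a` convexity in the second argument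
gives `D_f (q a ‖ p) ≤ ∑ b, π b * D_f (q a ‖ q b)`; now average over `a`.
-/

section Divergence

variable {𝕜 : Type*} [Field 𝕜]

/-- The perspective of `f`, as a function on pairs so that its joint convexity can be stated with
`ConvexOn`; it is meaningful only where the second coordinate is positive. -/
def perspective (f : 𝕜 → 𝕜) (z : 𝕜 × 𝕜) : 𝕜 :=
  z.2 * f (z.1 / z.2)

/-- The `f`-divergence `D_f (r ‖ s)` on a finite type. It is defined for arbitrary functions `r`
and `s`, not only for probability mass functions, and is meaningful only where `s` is positive. -/
def fDiv {X : Type*} [Fintype X] (f : 𝕜 → 𝕜) (r s : X → 𝕜) : 𝕜 :=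
  ∑ x, perspective f (r x, s x)

theorem mul_add_mul_div_mul_add_mul {r₁ s₁ r₂ s₂ : 𝕜} (hs₁ : s₁ ≠ 0) (hs₂ : s₂ ≠ 0) (a b : 𝕜) :
    (a * r₁ + b * r₂) / (a * s₁ + b * s₂) =
      a * s₁ / (a * s₁ + b * s₂) * (r₁ / s₁) + b * s₂ / (a * s₁ + b * s₂) * (r₂ / s₂) := by
  field_simp

variable [LinearOrder 𝕜]

/-- The cone over `S`: the natural domain of the perspective of a function defined on `S`. -/
def perspectiveDomain (S : Set 𝕜) : Set (𝕜 × 𝕜) :=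
  {z | 0 < z.2 ∧ z.1 / z.2 ∈ S}

variable [IsStrictOrderedRing 𝕜] {S : Set 𝕜} {f : 𝕜 → 𝕜}

theorem convex_perspectiveDomain (hS : Convex 𝕜 S) : Convex 𝕜 (perspectiveDomain S) := by
  rintro ⟨r₁, s₁⟩ ⟨hs₁ : 0 < s₁, h₁⟩ ⟨r₂, s₂⟩ ⟨hs₂ : 0 < s₂, h₂⟩ a b ha hb hab
  have hs : 0 < a * s₁ + b * s₂ := convex_Ioi (0 : 𝕜) hs₁ hs₂ ha hb hab
  refine ⟨hs, ?_⟩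
  change (a * r₁ + b * r₂) / (a * s₁ + b * s₂) ∈ S
  rw [mul_add_mul_div_mul_add_mul hs₁.ne' hs₂.ne']
  exact convex_iff_div.1 hS h₁ h₂ (by positivity) (by positivity) hs

theorem convexOn_perspective (hf : ConvexOn 𝕜 S f) :
    ConvexOn 𝕜 (perspectiveDomain S) (perspective f) := by
  refine ⟨convex_perspectiveDomain hf.1, ?_⟩
  rintro ⟨r₁, s₁⟩ ⟨hs₁ : 0 < s₁, h₁⟩ ⟨r₂, s₂⟩ ⟨hs₂ : 0 < s₂, h₂⟩ a b ha hb hab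
  have hs : 0 < a * s₁ + b * s₂ := convex_Ioi (0 : 𝕜) hs₁ hs₂ ha hb hab
  have jensen : f (a * s₁ / (a * s₁ + b * s₂) * (r₁ / s₁) +
        b * s₂ / (a * s₁ + b * s₂) * (r₂ / s₂)) ≤
      a * s₁ / (a * s₁ + b * s₂) * f (r₁ / s₁) + b * s₂ / (a * s₁ + b * s₂) * f (r₂ / s₂) :=
    (convexOn_iff_div.1 hf).2 h₁ h₂ (by positivity) (by positivity) hs
  calc
    (a * s₁ + b * s₂) * f ((a * r₁ + b * r₂) / (a * s₁ + b * s₂))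
      ≤ (a * s₁ + b * s₂) * (a * s₁ / (a * s₁ + b * s₂) * f (r₁ / s₁) +
          b * s₂ / (a * s₁ + b * s₂) * f (r₂ / s₂)) := by
        rw [mul_add_mul_div_mul_add_mul hs₁.ne' hs₂.ne']
        exact mul_le_mul_of_nonneg_left jensen hs.le
    _ = a * (s₁ * f (r₁ / s₁)) + b * (s₂ * f (r₂ / s₂)) := by
        field_simp

variable {X ι : Type*} [Fintype X] [Fintype ι]

theorem convexOn_fDiv (hf : ConvexOn 𝕜 S f) :
    ConvexOn 𝕜 {z : (X → 𝕜) × (X → 𝕜) | ∀ x, (z.1 x, z.2 x) ∈ perspectiveDomain S}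
      fun z => fDiv f z.1 z.2 := by
  have hpersp := convexOn_perspective hf
  refine ⟨fun y hy z hz a b ha hb hab x => hpersp.1 (hy x) (hz x) ha hb hab,
    fun y hy z hz a b ha hb hab => ?_⟩
  calc
    fDiv f (a • y + b • z).1 (a • y + b • z).2
      ≤ ∑ x, (a • perspective f (y.1 x, y.2 x) + b • perspective f (z.1 x, z.2 x)) :=
        sum_le_sum fun x _ => hpersp.2 (hy x) (hz x) ha hb hab
    _ = a • fDiv f y.1 y.2 + b • fDiv f z.1 z.2 := by
        simp only [fDiv, sum_add_distrib, smul_sum]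

theorem fDiv_sum_smul_right_le (hf : ConvexOn 𝕜 S f) {w : ι → 𝕜} (hw : ∀ i, 0 ≤ w i)
    (hw1 : ∑ i, w i = 1) {r : X → 𝕜} {s : ι → X → 𝕜}
    (hrs : ∀ i x, (r x, s i x) ∈ perspectiveDomain S) :
    fDiv f r (∑ i, w i • s i) ≤ ∑ i, w i * fDiv f r (s i) := by
  have hpair : ∑ i, w i • (r, s i) = (r, ∑ i, w i • s i) := by
    simp only [Prod.smul_mk, ← prod_mk_sum, ← sum_smul, hw1, one_smul]
  have jensen := (convexOn_fDiv hf).map_sum_le (p := fun i => (r, s i)) (fun i _ => hw i) hw1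
    (fun i _ => hrs i)
  simpa only [hpair, smul_eq_mul] using jensen

theorem sum_mul_fDiv_mixture_le (hf : ConvexOn 𝕜 (Set.Ioi 0) f) {w : ι → 𝕜}
    (hw : ∀ i, 0 ≤ w i) (hw1 : ∑ i, w i = 1) {q : ι → X → 𝕜} (hq : ∀ i x, 0 < q i x) :
    ∑ a, w a * fDiv f (q a) (∑ b, w b • q b) ≤ ∑ a, ∑ b, w a * w b * fDiv f (q a) (q b) := by
  simp only [mul_assoc, ← mul_sum]
  exact sum_le_sum fun a _ => mul_le_mul_of_nonneg_left
    (fDiv_sum_smul_right_le hf hw hw1 fun b x => ⟨hq b x, div_pos (hq a x) (hq b x)⟩) (hw a)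

end Divergence

section Clustering

variable {X ι : Type*} [Fintype X]

/-- The proportion `π(k)` of cluster `k`, for data distribution `p` and clustering posterior
`c`. -/
def clusterProportion {R : Type*} [NonUnitalNonAssocSemiring R] (p : X → R) (c : X → ι → R)
    (k : ι) : R :=
  ∑ x, p x * c x k

/-- The distribution `q_k` of the data conditional on cluster `k`, by Bayes' rule; it is meaningful
only where the cluster proportion is nonzero. -/
def clusterConditional {𝕜 : Type*} [Semifield 𝕜] (p : X → 𝕜) (c : X → ι → 𝕜) (k : ι) (x : X) : 𝕜 :=
  p x * c x k / clusterProportion p c k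

theorem sum_clusterProportion {R : Type*} [NonAssocSemiring R] [Fintype ι] {c : X → ι → R}
    (hc : ∀ x, ∑ k, c x k = 1) (p : X → R) : ∑ k, clusterProportion p c k = ∑ x, p x := by
  simp only [clusterProportion]
  rw [sum_comm]
  simp only [← mul_sum, hc, mul_one]

theorem sum_clusterProportion_smul_clusterConditional {𝕜 : Type*} [Semifield 𝕜] [Fintype ι]
    {p : X → 𝕜} {c : X → ι → 𝕜} (hc : ∀ x, ∑ k, c x k = 1)
    (hπ : ∀ k, clusterProportion p c k ≠ 0) :
    ∑ k, clusterProportion p c k • clusterConditional p c k = p := by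
  ext x
  simp only [Finset.sum_apply, Pi.smul_apply, smul_eq_mul, clusterConditional,
    mul_div_cancel₀ _ (hπ _), ← mul_sum, hc, mul_one]

theorem clusterProportion_pos {R : Type*} [Semiring R] [PartialOrder R] [IsStrictOrderedRing R]
    [Nonempty X] {p : X → R} {c : X → ι → R} (hp : ∀ x, 0 < p x) {k : ι}
    (hc : ∀ x, 0 < c x k) : 0 < clusterProportion p c k :=
  sum_pos (fun x _ => mul_pos (hp x) (hc x)) univ_nonempty

theorem gemini_ova_le_ovo_fdiv_general {𝕜 : Type*} [Field 𝕜] [LinearOrder 𝕜]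
    [IsStrictOrderedRing 𝕜] [Fintype ι] {p : X → 𝕜} (hp : ∀ x, 0 < p x)
    (hp1 : ∑ x, p x = 1) {c : X → ι → 𝕜} (hcpos : ∀ x k, 0 < c x k)
    (hc1 : ∀ x, ∑ k, c x k = 1) {f : 𝕜 → 𝕜} (hf : ConvexOn 𝕜 (Set.Ioi 0) f) :
    ∑ k, clusterProportion p c k * fDiv f (clusterConditional p c k) p ≤
      ∑ a, ∑ b, clusterProportion p c a * clusterProportion p c b *
        fDiv f (clusterConditional p c a) (clusterConditional p c b) := by
  have : Nonempty X :=
    univ_nonempty_iff.1 (nonempty_of_sum_ne_zero (hp1.trans_ne one_ne_zero))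
  have hπ : ∀ k, 0 < clusterProportion p c k := fun k => clusterProportion_pos hp (hcpos · k)
  have hπ1 : ∑ k, clusterProportion p c k = 1 := (sum_clusterProportion hc1 p).trans hp1
  have hq : ∀ k x, 0 < clusterConditional p c k x := fun k x =>
    div_pos (mul_pos (hp x) (hcpos x k)) (hπ k)
  simpa only [sum_clusterProportion_smul_clusterConditional hc1 fun k => (hπ k).ne'] using
    sum_mul_fDiv_mixture_le hf (fun k => (hπ k).le) hπ1 hq

end Clustering

/-- In the finite discriminative clustering setup with strictly
positive posterior, for every convex `f : (0,∞) → ℝ` with `f(1) = 0`, the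
one-vs-all f-divergence GEMINI is at most the one-vs-one f-divergence GEMINI. -/
theorem gemini_ova_le_ovo_fdiv
    {X : Type*} [Fintype X] [Nonempty X]
    (p : X → ℝ) (hp : ∀ x, 0 < p x) (hp1 : ∑ x, p x = 1)
    (K : ℕ) (hK : 0 < K)
    (c : X → Fin K → ℝ) (hcpos : ∀ x k, 0 < c x k) (hc1 : ∀ x, ∑ k, c x k = 1)
    (pr : Fin K → ℝ) (hpr : ∀ k, pr k = ∑ x, p x * c x k) (hprpos : ∀ k, 0 < pr k)
    (q : Fin K → X → ℝ) (hq : ∀ k x, q k x = p x * c x k / pr k)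
    (f : ℝ → ℝ) (hf : ConvexOn ℝ (Set.Ioi 0) f) (hf1 : f 1 = 0) :
    ∑ k, pr k * ∑ x, p x * f (q k x / p x)
      ≤ ∑ a, ∑ b, pr a * pr b * ∑ x, q b x * f (q a x / q b x) := by
  obtain rfl : pr = clusterProportion p c := funext hpr
  obtain rfl : q = clusterConditional p c := funext₂ hq
  exact gemini_ova_le_ovo_fdiv_general hp hp1 hcpos hc1 hf
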